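/- Let P be a property of groups that is invariant under group isomorphism, closed under passing to subgroups, and closed under direct products of two groups. If G is a finitely generated, residually finite group that is locally P up to powers, then G embeds into a finitely generated, perfect, infinite group Γ (i.e., there is an injective group homomorphism G → Γ) that is locally P up to powers. (Theorem 3.4 of the paper, stated without the branch-group conclusion.) -/

import Mathlib

/-- A group `G` is residually finite if every non-identity element avoids some
finite-index normal subgroup. -/
def ResiduallyFinite (G : Type*) [Group G] : Prop :=
  ∀ g : G, g ≠ 1 → ∃ N : Subgroup G, N.Normal ∧ N.FiniteIndex ∧ g ∉ N

/-- A group `Γ` is locally `P` up to powers if for every finite list of elements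
`γ₁, …, γ_k ∈ Γ` there are positive integers `t₁, …, t_k` such that the subgroup
`⟨γ₁^{t₁}, …, γ_k^{t_k}⟩` satisfies `P`. -/
def LocallyUpToPowers (P : (H : Type u) → [inst : Group H] → Prop)
    (Γ : Type u) [Group Γ] : Prop :=
  ∀ (k : ℕ) (γ : Fin k → Γ), ∃ t : Fin k → ℕ, (∀ i, 0 < t i) ∧
    P (Subgroup.closure (Set.range fun i => γ i ^ t i))

/-!
Let `T` be an infinite finitely generated torsion group and put `A = G × T`, so that `A` is still
locally `P` up to powers. For a finite set `X` with at least five points, let `Γ` be the subgroup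
of the permutational wreath product `(X → A) ⋊ Alt(X)` consisting of the pairs `(f, σ)` for which
`∏ x, f x` vanishes in the abelianization of `A`. It is finitely generated, and it is the normal
closure of `Alt(X)`, hence perfect because `Alt(X)` is. The maps `a ↦ (x ↦ β x a)` embed `A` in `Γ`
as soon as the endomorphisms `β x` of `A` include the identity and have trivial product in the
abelianization. A suitable power of every element of the wreath product lies in `X → A`, so `Γ` is
locally `P` up to powers.

For `T` we take the Gupta–Sidki 3-group, as an instance of a spinal group on the tree `List C`, `C`
of prime order. An element is a product of conjugates of directed automorphisms followed by a
rooted one. If the rooted part is trivial, the sections are shorter than the element, unless it is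
conjugate to a directed automorphism; otherwise the `|C|`-th power has sections that are no longer
than the element and have trivial rooted part. So every element has finite order, by induction. The
group is infinite because the sections at `1` of its proper subgroup fixing the first level exhaust
the whole group.
-/

universe u

section RootedTree

variable {X : Type*}

/-- The automorphism of the rooted tree `List X` that fixes the first level and acts by `h x` on
the subtree below the letter `x`, usually written `(h x)_{x ∈ X}`. -/
def ofSections : (X → Equiv.Perm (List X)) →* Equiv.Perm (List X) :=
  MonoidHom.toHomPerm
    { toFun h
        | [] => []
        | x :: w => x :: h x w
      map_one' := by funext w; cases w <;> rfl
      map_mul' f g := by funext w; cases w <;> rfl }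

@[simp]
theorem ofSections_nil (h : X → Equiv.Perm (List X)) : ofSections h [] = [] := rfl

@[simp]
theorem ofSections_cons (h : X → Equiv.Perm (List X)) (x : X) (w : List X) :
    ofSections h (x :: w) = x :: h x w := rfl

theorem ofSections_injective : Function.Injective (ofSections (X := X)) := by
  intro f g hfg
  ext1 x
  ext1 w
  simpa using Equiv.congr_fun hfg (x :: w)

theorem isOfFinOrder_ofSections [Finite X] {h : X → Equiv.Perm (List X)}
    (hh : ∀ x, IsOfFinOrder (h x)) : IsOfFinOrder (ofSections h) :=
  ofSections.isOfFinOrder (.pi hh)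

/-- The rooted automorphism of the tree `List X` that permutes the subtrees below the root
by `σ`. -/
def rooted : Equiv.Perm X →* Equiv.Perm (List X) :=
  MonoidHom.toHomPerm
    { toFun σ
        | [] => []
        | x :: w => σ x :: w
      map_one' := by funext w; cases w <;> rfl
      map_mul' σ τ := by funext w; cases w <;> rfl }

@[simp]
theorem rooted_nil (σ : Equiv.Perm X) : rooted σ [] = [] := rfl

@[simp]
theorem rooted_cons (σ : Equiv.Perm X) (x : X) (w : List X) :
    rooted σ (x :: w) = σ x :: w := rfl

theorem rooted_mul_ofSections (σ : Equiv.Perm X) (h : X → Equiv.Perm (List X)) :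
    rooted σ * ofSections h = ofSections (h ∘ ⇑σ⁻¹) * rooted σ := by
  ext1 w
  cases w <;> simp

theorem ofSections_mul_rooted_pow (h : X → Equiv.Perm (List X)) (σ : Equiv.Perm X) (n : ℕ) :
    (ofSections h * rooted σ) ^ n =
      ofSections (fun x => (List.ofFn fun j : Fin n => h ((σ⁻¹ ^ (j : ℕ)) x)).prod) *
        rooted (σ ^ n) := by
  induction n with
  | zero =>
    have : (fun x => (List.ofFn fun j : Fin 0 => h ((σ⁻¹ ^ (j : ℕ)) x)).prod) = 1 := by
      ext1; simp
    rw [this]; simp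
  | succ n ih =>
    have prod_succ : (fun x => (List.ofFn fun j : Fin (n + 1) => h ((σ⁻¹ ^ (j : ℕ)) x)).prod) =
        (fun x => (List.ofFn fun j : Fin n => h ((σ⁻¹ ^ (j : ℕ)) x)).prod) *
          (h ∘ ⇑(σ ^ n)⁻¹) := by
      ext1 x
      rw [List.ofFn_succ', List.concat_eq_append, List.prod_append]
      simp
    rw [pow_succ, ih, mul_assoc, ← mul_assoc (rooted (σ ^ n)), rooted_mul_ofSections, prod_succ,
      map_mul, pow_succ σ, map_mul]
    simp only [mul_assoc]

end RootedTree

section SpinalGroup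

variable {B C : Type*} [Group B] [Group C]

/-- The rooted automorphism of the tree `List C` that multiplies the first letter by `k`. -/
def rootedMul : C →* Equiv.Perm (List C) :=
  rooted.comp (MulAction.toPermHom C C)

theorem rootedMul_cons (k x : C) (w : List C) : rootedMul k (x :: w) = (k * x) :: w := rfl

variable [DecidableEq C] (ω : C → B →* C)

/-- The action on the tree `List C` of the directed automorphism attached to `b : B`: along the ray
`1, 1, 1, …` it hangs the translation by `ω x b` at each neighbour `x ≠ 1` of the ray. -/
def directedAct (b : B) : List C → List C
  | [] => []
  | x :: w => x :: if x = 1 then directedAct b w else rootedMul (ω x b) w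

theorem directedAct_one (w : List C) : directedAct ω 1 w = w := by
  induction w with
  | nil => rfl
  | cons x w ih => simp [directedAct, ih]

theorem directedAct_mul (a b : B) (w : List C) :
    directedAct ω (a * b) w = directedAct ω a (directedAct ω b w) := by
  induction w with
  | nil => rfl
  | cons x w ih => by_cases hx : x = 1 <;> simp [directedAct, ih, hx]

/-- The homomorphism to the automorphisms of the tree `List C` given by `directedAct`. -/
def directed : B →* Equiv.Perm (List C) :=
  MonoidHom.toHomPerm
    { toFun := directedAct ω
      map_one' := funext (directedAct_one ω)
      map_mul' a b := funext (directedAct_mul ω a b) }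

theorem directed_eq_ofSections (b : B) :
    directed ω b =
      ofSections fun x => if x = 1 then directed ω b else rootedMul (ω x b) := by
  ext1 w
  cases w with
  | nil => rfl
  | cons x w =>
    change (x :: if x = 1 then directed ω b w else rootedMul (ω x b) w) = _
    rw [ofSections_cons]
    split_ifs <;> rfl

/-- The conjugates of the directed automorphisms by the translation by `k`; they are directed along
the ray `k, 1, 1, …`. -/
def directedAt (k : C) : B →* Equiv.Perm (List C) :=
  (MulAut.conj (rootedMul k)).toMonoidHom.comp (directed ω)

theorem directedAt_one : directedAt ω 1 = directed ω := by
  ext1 b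
  simp [directedAt]

theorem directedAt_eq_ofSections (k : C) (b : B) :
    directedAt ω k b =
      ofSections fun x => if x = k then directed ω b else rootedMul (ω (k⁻¹ * x) b) := by
  change rootedMul k * directed ω b * (rootedMul k)⁻¹ = _
  rw [mul_inv_eq_iff_eq_mul]
  nth_rw 1 [directed_eq_ofSections]
  rw [rootedMul, MonoidHom.comp_apply, rooted_mul_ofSections]
  congr 2
  ext1 x
  simp [inv_mul_eq_one, eq_comm]

theorem rootedMul_mul_directedAt (l k : C) (b : B) :
    rootedMul l * directedAt ω k b = directedAt ω (l * k) b * rootedMul l := by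
  simp [directedAt, mul_assoc]

/-- The product of the automorphisms `directedAt ω k b` over the letters `(k, b)` of a word. -/
def directedProd (w : List (C × B)) : Equiv.Perm (List C) :=
  (w.map fun p => directedAt ω p.1 p.2).prod

@[simp]
theorem directedProd_nil : directedProd ω [] = 1 := rfl

@[simp]
theorem directedProd_cons (p : C × B) (w : List (C × B)) :
    directedProd ω (p :: w) = directedAt ω p.1 p.2 * directedProd ω w := by
  simp [directedProd]

@[simp]
theorem directedProd_append (v w : List (C × B)) :
    directedProd ω (v ++ w) = directedProd ω v * directedProd ω w := by
  simp [directedProd]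

theorem directedProd_eq_directedAt {k : C} {w : List (C × B)} (hw : ∀ p ∈ w, p.1 = k) :
    directedProd ω w = directedAt ω k (w.map Prod.snd).prod := by
  rw [directedProd, map_list_prod, List.map_map]
  congr 1
  exact List.map_congr_left fun p hp => by simp [hw p hp]

theorem rootedMul_mul_directedProd (k : C) (w : List (C × B)) :
    rootedMul k * directedProd ω w =
      directedProd ω (w.map fun p => (k * p.1, p.2)) * rootedMul k := by
  induction w with
  | nil => simp
  | cons p w ih =>
    rw [List.map_cons, directedProd_cons, directedProd_cons, ← mul_assoc,
      rootedMul_mul_directedAt, mul_assoc, ih, mul_assoc]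

/-- `g` is a product of at most `n` conjugates of directed automorphisms followed by the
translation by `k`: the length function on which the torsion proof inducts, together with the
action of `g` on the first level. -/
def HasSyllables (n : ℕ) (k : C) (g : Equiv.Perm (List C)) : Prop :=
  ∃ w : List (C × B), w.length ≤ n ∧ g = directedProd ω w * rootedMul k

namespace HasSyllables

variable {ω} {m n : ℕ} {k l : C} {g h : Equiv.Perm (List C)}

theorem mono (hg : HasSyllables ω m k g) (hmn : m ≤ n) : HasSyllables ω n k g := by
  obtain ⟨w, hw, rfl⟩ := hg
  exact ⟨w, hw.trans hmn, rfl⟩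

theorem of_rootedMul (k : C) : HasSyllables ω 0 k (rootedMul k) := ⟨[], by simp⟩

theorem one : HasSyllables ω 0 1 1 := ⟨[], by simp⟩

theorem of_directed (b : B) : HasSyllables ω 1 1 (directed ω b) :=
  ⟨[(1, b)], by simp [directedAt_one]⟩

theorem mul (hg : HasSyllables ω m k g) (hh : HasSyllables ω n l h) :
    HasSyllables ω (m + n) (k * l) (g * h) := by
  obtain ⟨v, hv, rfl⟩ := hg
  obtain ⟨w, hw, rfl⟩ := hh
  refine ⟨v ++ w.map fun p => (k * p.1, p.2), ?_, ?_⟩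
  · rw [List.length_append, List.length_map]
    exact add_le_add hv hw
  · rw [directedProd_append, map_mul, mul_assoc, ← mul_assoc (rootedMul k),
      rootedMul_mul_directedProd]
    simp only [mul_assoc]

end HasSyllables

/-- The (constant) spinal group with defining homomorphisms `ω`. -/
def spinalGroup : Subgroup (Equiv.Perm (List C)) :=
  Subgroup.closure (Set.range rootedMul ∪ Set.range (directed ω))

variable {ω}

theorem rootedMul_mem_spinalGroup (k : C) : rootedMul k ∈ spinalGroup ω :=
  Subgroup.subset_closure (.inl ⟨k, rfl⟩)

theorem directedAt_mem_spinalGroup (k : C) (b : B) : directedAt ω k b ∈ spinalGroup ω :=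
  mul_mem (mul_mem (rootedMul_mem_spinalGroup k) (Subgroup.subset_closure (.inr ⟨b, rfl⟩)))
    (inv_mem (rootedMul_mem_spinalGroup k))

theorem fg_spinalGroup [Finite B] [Finite C] : Group.FG (spinalGroup ω) :=
  Group.closure_finite_fg _

theorem exists_hasSyllables_of_mem_spinalGroup {g : Equiv.Perm (List C)}
    (hg : g ∈ spinalGroup ω) : ∃ n k, HasSyllables ω n k g := by
  have of_mem {g} (hg : g ∈ Set.range rootedMul ∪ Set.range (directed ω)) :
      ∃ n k, HasSyllables ω n k g ∧ HasSyllables ω n k⁻¹ g⁻¹ := by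
    obtain ⟨k, rfl⟩ | ⟨b, rfl⟩ := hg
    · exact ⟨0, k, .of_rootedMul k, map_inv (rootedMul (C := C)) k ▸ .of_rootedMul k⁻¹⟩
    · exact ⟨1, 1, .of_directed b, by
        simpa only [inv_one, map_inv] using HasSyllables.of_directed b⁻¹⟩
  induction hg using Subgroup.closure_induction_left with
  | one => exact ⟨0, 1, .one⟩
  | mul_left x hx y _ hy =>
    obtain ⟨m, k, hx, -⟩ := of_mem hx
    obtain ⟨n, l, hy⟩ := hy
    exact ⟨_, _, hx.mul hy⟩
  | inv_mul_cancel x hx y _ hy =>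
    obtain ⟨m, k, -, hx⟩ := of_mem hx
    obtain ⟨n, l, hy⟩ := hy
    exact ⟨_, _, hx.mul hy⟩

theorem le_map_eval_comap_ofSections {y : C} (hy : y ≠ 1) (hωy : Function.Surjective (ω y)) :
    spinalGroup ω ≤ ((spinalGroup ω).comap ofSections).map (Pi.evalMonoidHom _ 1) := by
  have of_directedAt (k : C) (b : B) : (if 1 = k then directed ω b else rootedMul (ω k⁻¹ b)) ∈
      ((spinalGroup ω).comap ofSections).map (Pi.evalMonoidHom _ 1) := by
    refine ⟨fun x => if x = k then directed ω b else rootedMul (ω (k⁻¹ * x) b), ?_, by simp⟩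
    simpa [← directedAt_eq_ofSections] using directedAt_mem_spinalGroup k b
  refine (Subgroup.closure_le _).2 ?_
  rintro _ (⟨k, rfl⟩ | ⟨b, rfl⟩)
  · obtain ⟨b, rfl⟩ := hωy k
    simpa [hy, eq_comm (a := (1 : C))] using of_directedAt y⁻¹ b
  · simpa using of_directedAt 1 b

theorem infinite_spinalGroup {y : C} (hy : y ≠ 1) (hωy : Function.Surjective (ω y)) :
    Infinite (spinalGroup ω) := by
  by_contra hfin
  rw [not_infinite_iff_finite] at hfin
  let stab := (spinalGroup ω).comap ofSections
  let incl : stab →* spinalGroup ω := ofSections.subgroupComap (spinalGroup ω)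
  have incl_inj : Function.Injective incl := fun f g hfg =>
    Subtype.ext (ofSections_injective (congrArg Subtype.val hfg))
  have : Finite stab := .of_injective incl incl_inj
  have stab_map_surj := (Pi.evalMonoidHom _ 1).subgroupMap_surjective stab
  have : Finite (stab.map (Pi.evalMonoidHom _ 1)) := .of_surjective _ stab_map_surj
  have card_le : Nat.card (spinalGroup ω) ≤ Nat.card stab :=
    (Subgroup.card_le_of_le (le_map_eval_comap_ofSections hy hωy)).trans
      (Nat.card_le_card_of_surjective _ stab_map_surj)
  obtain ⟨h, hh⟩ := (incl_inj.bijective_of_nat_card_le card_le).2 ⟨_, rootedMul_mem_spinalGroup y⟩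
  have : ofSections h.1 [1] = rootedMul y [1] := congrArg (fun g => g.1 [1]) hh
  rw [ofSections_cons, rootedMul_cons, List.cons.injEq, mul_one] at this
  exact hy this.1.symm

end SpinalGroup

theorem bijective_pow_mul_of_prime_card {C : Type*} [Group C] (hC : (Nat.card C).Prime) {k : C}
    (hk : k ≠ 1) (x : C) : Function.Bijective fun j : Fin (Nat.card C) => k ^ (j : ℕ) * x := by
  have : Fact (Nat.card C).Prime := ⟨hC⟩
  have : Finite C := Nat.finite_of_card_ne_zero hC.ne_zero
  have hord : orderOf k = Nat.card C :=
    orderOf_eq_card_of_zpowers_eq_top (zpowers_eq_top_of_prime_card rfl hk)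
  refine (Nat.bijective_iff_injective_and_card _).2 ⟨fun i j hij => ?_, Nat.card_fin _⟩
  exact Fin.ext (pow_injOn_Iio_orderOf (by simp [hord]) (by simp [hord]) (mul_right_cancel hij))

theorem sum_count_eq_length {α : Type*} [Fintype α] [DecidableEq α] (l : List α) :
    ∑ x, l.count x = l.length := by
  simpa using Multiset.sum_count_eq_card (m := (↑l : Multiset α)) fun _ _ => Finset.mem_univ _

section Torsion

variable {B C : Type*} [Group B] [CommGroup C] [DecidableEq C] {ω : C → B →* C}

theorem HasSyllables.prod_ofFn {n : ℕ} {ℓ : Fin n → ℕ} {c : Fin n → C}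
    {h : Fin n → Equiv.Perm (List C)} (H : ∀ j, HasSyllables ω (ℓ j) (c j) (h j)) :
    HasSyllables ω (∑ j, ℓ j) (∏ j, c j) (List.ofFn h).prod := by
  induction n with
  | zero => simpa using HasSyllables.one
  | succ n ih =>
    rw [Fin.sum_univ_succ, Fin.prod_univ_succ, List.ofFn_succ, List.prod_cons]
    exact (H 0).mul (ih fun j => H j.succ)

variable [Fintype C]

theorem exists_ofSections_directedProd (hω₁ : ω 1 = 1) (hω : ∏ x, ω x = 1) (w : List (C × B)) :
    ∃ (h : C → Equiv.Perm (List C)) (c : C → C), directedProd ω w = ofSections h ∧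
      (∀ x, HasSyllables ω ((w.map Prod.fst).count x) (c x) (h x)) ∧ ∏ x, c x = 1 := by
  induction w with
  | nil => exact ⟨1, 1, by simp, fun _ => .one, by simp⟩
  | cons p w ih =>
    obtain ⟨h, c, hw, hh, hc⟩ := ih
    obtain ⟨k, b⟩ := p
    refine ⟨_, fun x => ω (k⁻¹ * x) b * c x,
      by rw [directedProd_cons, hw, directedAt_eq_ofSections, ← map_mul], fun x => ?_, ?_⟩
    · rw [List.map_cons, List.count_cons, add_comm]
      refine .mul ?_ (hh x)
      by_cases hx : x = k
      · simpa [hx, hω₁] using HasSyllables.of_directed b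
      · simpa [hx, Ne.symm hx] using HasSyllables.of_rootedMul (ω (k⁻¹ * x) b)
    · have hb : ∏ x, ω (k⁻¹ * x) b = ∏ x, ω x b :=
        Equiv.prod_comp (Equiv.mulLeft k⁻¹) fun x => ω x b
      rw [Finset.prod_mul_distrib, hc, mul_one, hb, ← MonoidHom.finsetProd_apply, hω,
        MonoidHom.one_apply]

namespace HasSyllables

variable {n : ℕ} {k : C} {g : Equiv.Perm (List C)}

theorem eq_directedAt_or_ofSections (hω₁ : ω 1 = 1) (hω : ∏ x, ω x = 1)
    (hg : HasSyllables ω n 1 g) :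
    (∃ k b, g = directedAt ω k b) ∨
      ∃ h, g = ofSections h ∧ ∀ x, ∃ m < n, ∃ k, HasSyllables ω m k (h x) := by
  obtain ⟨w, hwn, rfl⟩ := hg
  rw [map_one, mul_one]
  by_cases hw : ∃ k, ∀ p ∈ w, p.1 = k
  · obtain ⟨k, hk⟩ := hw
    exact .inl ⟨k, _, directedProd_eq_directedAt ω hk⟩
  · obtain ⟨h, c, hwh, hh, -⟩ := exists_ofSections_directedProd hω₁ hω w
    refine .inr ⟨h, hwh, fun x => ⟨_, ?_, c x, hh x⟩⟩
    refine (lt_of_le_of_ne List.count_le_length fun hx => hw ⟨x, ?_⟩).trans_le (by simpa)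
    simpa [eq_comm] using List.count_eq_length.1 hx

theorem exists_pow_card_eq_ofSections (hC : (Nat.card C).Prime) (hω₁ : ω 1 = 1)
    (hω : ∏ x, ω x = 1) (hk : k ≠ 1) (hg : HasSyllables ω n k g) :
    ∃ h, g ^ Nat.card C = ofSections h ∧ ∀ x, HasSyllables ω n 1 (h x) := by
  obtain ⟨w, hwn, rfl⟩ := hg
  obtain ⟨h, c, hwh, hh, hc⟩ := exists_ofSections_directedProd hω₁ hω w
  refine ⟨fun x => (List.ofFn fun j : Fin (Nat.card C) => h (k⁻¹ ^ (j : ℕ) * x)).prod, ?_,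
    fun x => ?_⟩
  · rw [hwh, rootedMul, MonoidHom.comp_apply, ofSections_mul_rooted_pow, ← map_pow,
      pow_card_eq_one', map_one, map_one, mul_one]
    congr! 6
    rw [← map_inv, ← map_pow, MulAction.toPermHom_apply, MulAction.toPerm_apply, smul_eq_mul]
  · have hbij := bijective_pow_mul_of_prime_card hC (inv_ne_one.2 hk) x
    have := prod_ofFn fun j : Fin (Nat.card C) => hh (k⁻¹ ^ (j : ℕ) * x)
    rw [hbij.prod_comp c, hc, hbij.sum_comp fun y => (w.map Prod.fst).count y,
      sum_count_eq_length, List.length_map] at this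
    exact this.mono hwn

theorem isOfFinOrder [Finite B] (hC : (Nat.card C).Prime) (hω₁ : ω 1 = 1) (hω : ∏ x, ω x = 1)
    (hg : HasSyllables ω n k g) : IsOfFinOrder g := by
  induction n using Nat.strong_induction_on generalizing k g with
  | _ n ih =>
    have of_one {g} (hg : HasSyllables ω n 1 g) : IsOfFinOrder g := by
      obtain ⟨k, b, rfl⟩ | ⟨h, rfl, hh⟩ := hg.eq_directedAt_or_ofSections hω₁ hω
      · exact (directedAt ω k).isOfFinOrder (isOfFinOrder_of_finite b)
      · refine isOfFinOrder_ofSections fun x => ?_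
        obtain ⟨m, hm, l, hx⟩ := hh x
        exact ih m hm hx
    by_cases hk : k = 1
    · exact of_one (hk ▸ hg)
    · obtain ⟨h, hgh, hh⟩ := hg.exists_pow_card_eq_ofSections hC hω₁ hω hk
      refine .of_pow (n := Nat.card C) ?_ hC.ne_zero
      exact hgh ▸ isOfFinOrder_ofSections fun x => of_one (hh x)

end HasSyllables

theorem isMulTorsion_spinalGroup [Finite B] (hC : (Nat.card C).Prime)
    (hω₁ : ω 1 = 1) (hω : ∏ x, ω x = 1) : IsMulTorsion (spinalGroup ω) := by
  intro g
  obtain ⟨n, k, hg⟩ := exists_hasSyllables_of_mem_spinalGroup g.2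
  exact Submonoid.isOfFinOrder_coe.1 (hg.isOfFinOrder hC hω₁ hω)

end Torsion

theorem exists_infinite_fg_isMulTorsion :
    ∃ (T : Type*) (_ : Group T), Infinite T ∧ Group.FG T ∧ IsMulTorsion T := by
  -- These data define the Gupta–Sidki 3-group.
  let C := Multiplicative (ZMod 3)
  let g : C := .ofAdd 1
  let ω : C → C →* C := Pi.mulSingle g (MonoidHom.id C) * Pi.mulSingle g⁻¹ (MonoidHom.id C)⁻¹
  have hg₁ : g ≠ 1 := by decide
  have hg : g ≠ g⁻¹ := by decide
  have hC : (Nat.card C).Prime := by simpa [C] using Nat.prime_three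
  have hω₁ : ω 1 = 1 := by
    simp only [ω, Pi.mul_apply]
    rw [Pi.mulSingle_eq_of_ne hg₁.symm, Pi.mulSingle_eq_of_ne (inv_ne_one.2 hg₁).symm, one_mul]
  have hω : ∏ x, ω x = 1 := by simp [ω, Finset.prod_mul_distrib]
  have hωg : ω g = MonoidHom.id C := by simp [ω, hg]
  have := fg_spinalGroup (ω := ω)
  have : Infinite (spinalGroup ω) := infinite_spinalGroup hg₁ (hωg ▸ Function.surjective_id)
  have up_surj : Function.Surjective (MulEquiv.ulift (α := spinalGroup ω)).symm.toMonoidHom :=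
    MulEquiv.surjective _
  exact ⟨ULift (spinalGroup ω), inferInstance, inferInstance, Group.fg_of_surjective up_surj,
    (isMulTorsion_spinalGroup hC hω₁ hω).of_surjective up_surj⟩

section BalancedEndomorphisms

theorem exists_smul_sub_sum_dual_eq_zero (R M : Type*) [CommRing R] [IsDomain R]
    [IsPrincipalIdealRing R] [AddCommGroup M] [Module R M] [Module.Finite R M] :
    ∃ r : R, r ≠ 0 ∧ ∃ (n : ℕ) (φ : Fin n → Module.Dual R M) (c : Fin n → M),
      ∀ x, r • (x - ∑ i, φ i x • c i) = 0 := by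
  obtain ⟨n, b⟩ := Module.basisOfFiniteTypeTorsionFree' (R := R) (M := M ⧸ Submodule.torsion R M)
  choose c hc using fun i => Submodule.mkQ_surjective _ (b i)
  obtain ⟨r, hr, hr₀⟩ := Submodule.annihilator_top_inter_nonZeroDivisors
    (Submodule.torsion_isTorsion (R := R) (M := M))
  refine ⟨r, nonZeroDivisors.ne_zero hr₀, n, fun i => b.coord i ∘ₗ Submodule.mkQ _, c, fun x => ?_⟩
  have hx : x - ∑ i, b.coord i (Submodule.mkQ _ x) • c i ∈ Submodule.torsion R M := by
    refine (Submodule.Quotient.mk_eq_zero _).1 ?_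
    rw [← Submodule.mkQ_apply, map_sub, map_sum]
    simp only [map_smul, hc, Module.Basis.coord_apply, b.sum_repr, sub_self]
  exact congrArg Subtype.val (Submodule.mem_annihilator.1 hr ⟨_, hx⟩ trivial)

-- Up to torsion, the identity of the abelianization is a sum of maps `φ i • c i` of rank one, and
-- the negatives of those lift to endomorphisms of `A`; repetition kills the torsion and makes `ι`
-- large.
theorem exists_endomorphisms_prod_abelianization_eq_one (A : Type*) [Group A] [Group.FG A]
    (m : ℕ) :
    ∃ (ι : Type) (_ : Fintype ι) (β : ι → A →* A), m ≤ Nat.card ι ∧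
      (∃ i, β i = MonoidHom.id A) ∧ ∀ a, ∏ i, Abelianization.of (β i a) = 1 := by
  have : Group.FG (Abelianization A) := inferInstanceAs (Group.FG (A ⧸ commutator A))
  have : Module.Finite ℤ (Additive (Abelianization A)) :=
    Module.Finite.iff_addGroup_fg.2 inferInstance
  obtain ⟨r, hr, n, φ, c, hφ⟩ := exists_smul_sub_sum_dual_eq_zero ℤ (Additive (Abelianization A))
  have of_surj : Function.Surjective (Abelianization.of (G := A)) := QuotientGroup.mk_surjective
  choose t ht using fun i => of_surj (c i).toMul
  let α (i : Fin n) : A →* A := (zpowersHom A (t i)⁻¹).comp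
    ((φ i).toAddMonoidHom.toMultiplicativeRight.comp Abelianization.of)
  let β (o : Option (Fin n)) : A →* A := o.elim (MonoidHom.id A) α
  have hα (i : Fin n) (a : A) :
      Abelianization.of (α i a) = ((c i).toMul ^ φ i (.ofMul (.of a)))⁻¹ := by
    simp only [α, MonoidHom.comp_apply, zpowersHom_apply, map_zpow, map_inv, ht, inv_zpow]
    rfl
  have hβ (a : A) : (∏ o, Abelianization.of (β o a)) ^ r.natAbs = 1 := by
    rw [pow_natAbs_eq_one, Fintype.prod_option]
    simp only [β, Option.elim_none, Option.elim_some, hα, Finset.prod_inv_distrib, ← div_eq_mul_inv]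
    exact hφ (.ofMul (.of a))
  have r_pos : 0 < r.natAbs := Int.natAbs_pos.2 hr
  refine ⟨Fin ((m + 1) * r.natAbs) × Option (Fin n), inferInstance, fun p => β p.2, ?_,
    ⟨(⟨0, by positivity⟩, none), rfl⟩, fun a => ?_⟩
  · simp only [Nat.card_eq_fintype_card, Fintype.card_prod, Fintype.card_fin, Fintype.card_option]
    exact (Nat.le_succ m).trans
      ((Nat.le_mul_of_pos_right _ r_pos).trans (Nat.le_mul_of_pos_right _ n.succ_pos))
  · rw [Fintype.prod_prod_type]
    simp only [Finset.prod_const, Finset.card_univ, Fintype.card_fin, pow_mul', hβ, one_pow]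

end BalancedEndomorphisms

theorem exists_ne_and_ne {X : Type*} (hX : 3 ≤ Nat.card X) (i j : X) : ∃ k, k ≠ i ∧ k ≠ j := by
  classical
  have : Finite X := Nat.finite_of_card_ne_zero (by lia)
  cases nonempty_fintype X
  rw [Nat.card_eq_fintype_card] at hX
  obtain ⟨k, -, hk⟩ := Finset.exists_mem_notMem_of_card_lt_card
    (Finset.card_le_two.trans_lt hX : Finset.card {i, j} < Finset.univ.card)
  exact ⟨k, by simpa using hk⟩

section PermWreath

open Pi (mulSingle)
open scoped commutatorElement

theorem eq_prod_mulSingle_div_mulSingle {M X : Type*} [CommGroup M] [Fintype X] [DecidableEq X]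
    {f : X → M} (hf : ∏ x, f x = 1) (i : X) :
    f = ∏ x, mulSingle x (f x) / mulSingle i (f x) := by
  have hfi : ∏ x, mulSingle i (f x) = (1 : X → M) := by
    simpa [hf] using (map_prod (MonoidHom.mulSingle (fun _ : X => M) i) f Finset.univ).symm
  rw [Finset.prod_div_distrib, Finset.univ_prod_mulSingle, hfi, div_one]

section Base

variable {A X : Type*} [Group A] [DecidableEq X] {S : Set A} {D : Subgroup (X → A)}

theorem exists_mem_apply_eq_of_closure_eq_top (hS : Subgroup.closure S = ⊤)
    (hD : ∀ i j, ∀ s ∈ S, mulSingle i s / mulSingle j s ∈ D) {i j : X} (hij : i ≠ j) (a : A) :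
    ∃ f ∈ D, f i = a ∧ ∀ x, x ≠ i → x ≠ j → f x = 1 := by
  have ha : a ∈ Subgroup.closure S := hS ▸ Subgroup.mem_top a
  induction ha using Subgroup.closure_induction with
  | mem s hs => exact ⟨_, hD i j s hs, by simp [hij], fun x hxi hxj => by simp [hxi, hxj]⟩
  | one => exact ⟨1, one_mem D, rfl, fun _ _ _ => rfl⟩
  | mul a b _ _ ha hb =>
    obtain ⟨f, hf, rfl, hf₁⟩ := ha
    obtain ⟨g, hg, rfl, hg₁⟩ := hb
    exact ⟨f * g, mul_mem hf hg, rfl, fun x hxi hxj => by simp [hf₁ x hxi hxj, hg₁ x hxi hxj]⟩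
  | inv a _ ha =>
    obtain ⟨f, hf, rfl, hf₁⟩ := ha
    exact ⟨f⁻¹, inv_mem hf, rfl, fun x hxi hxj => by simp [hf₁ x hxi hxj]⟩

-- If `f` is supported on `{i, j}` and `g` on `{i, k}`, then `⁅f, g⁆` is supported on `{i}`.
theorem mulSingle_commutatorElement_mem (hX : 3 ≤ Nat.card X) (hS : Subgroup.closure S = ⊤)
    (hD : ∀ i j, ∀ s ∈ S, mulSingle i s / mulSingle j s ∈ D) (i : X) (a b : A) :
    mulSingle i ⁅a, b⁆ ∈ D := by
  obtain ⟨j, hji, -⟩ := exists_ne_and_ne hX i i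
  obtain ⟨k, hki, hkj⟩ := exists_ne_and_ne hX i j
  obtain ⟨f, hf, rfl, hf₁⟩ := exists_mem_apply_eq_of_closure_eq_top hS hD hji.symm a
  obtain ⟨g, hg, rfl, hg₁⟩ := exists_mem_apply_eq_of_closure_eq_top hS hD hki.symm b
  have hfg : mulSingle i ⁅f i, g i⁆ = ⁅f, g⁆ := by
    ext x
    change _ = ⁅f x, g x⁆
    by_cases hxi : x = i
    · rw [hxi, Pi.mulSingle_eq_same]
    by_cases hxj : x = j
    · rw [hg₁ x hxi (hxj ▸ hkj.symm), commutatorElement_one_right, Pi.mulSingle_eq_of_ne hxi]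
    · rw [hf₁ x hxi hxj, commutatorElement_one_left, Pi.mulSingle_eq_of_ne hxi]
  rw [hfg, commutatorElement_def]
  exact mul_mem (mul_mem (mul_mem hf hg) (inv_mem hf)) (inv_mem hg)

theorem mem_of_forall_mem_commutator (hX : 3 ≤ Nat.card X)
    (hS : Subgroup.closure S = ⊤) (hD : ∀ i j, ∀ s ∈ S, mulSingle i s / mulSingle j s ∈ D)
    {f : X → A} (hf : ∀ x, f x ∈ commutator A) : f ∈ D := by
  have : Finite X := Nat.finite_of_card_ne_zero (by lia)
  refine Subgroup.pi_mem_of_mulSingle_mem f fun i => ?_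
  have : commutator A ≤ D.comap (MonoidHom.mulSingle _ i) :=
    Subgroup.commutator_le.2 fun a _ b _ => mulSingle_commutatorElement_mem hX hS hD i a b
  exact this (hf i)

theorem mem_of_prod_abelianization_eq_one [Fintype X] (hX : 3 ≤ Nat.card X)
    (hS : Subgroup.closure S = ⊤) (hD : ∀ i j, ∀ s ∈ S, mulSingle i s / mulSingle j s ∈ D)
    {f : X → A} (hf : ∏ x, Abelianization.of (f x) = 1) : f ∈ D := by
  let π : (X → A) →* (X → Abelianization A) := Abelianization.of.compLeft X
  have hπ₁ (i : X) (a : A) : π (mulSingle i a) = mulSingle i (.of a) :=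
    funext <| Pi.apply_mulSingle (fun _ (b : A) => Abelianization.of b) (fun _ => map_one _) i a
  have hπ (i j : X) (a : A) : mulSingle i (.of a) / mulSingle j (.of a) ∈ D.map π := by
    let δ : Abelianization A →* X → Abelianization A :=
      MonoidHom.mulSingle (fun _ => Abelianization A) i /
        MonoidHom.mulSingle (fun _ => Abelianization A) j
    have : Subgroup.closure S ≤ (D.map π).comap (δ.comp Abelianization.of) := by
      refine (Subgroup.closure_le _).2 fun s hs => ⟨_, hD i j s hs, ?_⟩
      rw [map_div, hπ₁, hπ₁]
      rfl
    exact this (hS ▸ Subgroup.mem_top a)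
  obtain ⟨i⟩ : Nonempty X := Finite.card_pos_iff.1 (by lia)
  have hπf : π f ∈ D.map π := by
    rw [eq_prod_mulSingle_div_mulSingle (f := π f) hf i]
    exact prod_mem fun x _ => hπ x i (f x)
  obtain ⟨d, hd, hdf⟩ := hπf
  rw [← mul_inv_cancel_left d f]
  refine mul_mem hd (mem_of_forall_mem_commutator hX hS hD fun x => ?_)
  rw [← Abelianization.ker_of, MonoidHom.mem_ker, Pi.mul_apply, Pi.inv_apply, map_mul, map_inv,
    inv_mul_eq_one]
  exact congrFun hdf x

end Base

/-- The permutational wreath product of `A` with a group `Q` acting on `X`. -/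
abbrev PermWreath (A Q X : Type*) [Group A] [Group Q] [MulAction Q X] : Type _ :=
  (X → A) ⋊[mulAutArrow] Q

namespace PermWreath

open SemidirectProduct (inl inr)

variable {A Q X : Type*} [Group A] [Group Q] [MulAction Q X]

theorem conj_inl_mulSingle [DecidableEq X] (q : Q) (i : X) (a : A) :
    (inr q * inl (mulSingle i a) * inr q⁻¹ : PermWreath A Q X) = inl (mulSingle (q • i) a) := by
  rw [← SemidirectProduct.inl_aut]
  congr 1
  ext x
  change (mulSingle i a : X → A) (q⁻¹ • x) = _
  simp [Pi.mulSingle_apply, inv_smul_eq_iff]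

variable [Fintype X]

/-- The product of all coordinates, taken in the abelianization. -/
def total : PermWreath A Q X →* Abelianization A :=
  SemidirectProduct.lift (∏ x, Abelianization.of.comp (Pi.evalMonoidHom _ x)) 1 fun q => by
    ext f
    simp only [MonoidHom.comp_apply, MonoidHom.finsetProd_apply, MonoidHom.one_apply, map_one]
    exact Equiv.prod_comp (MulAction.toPerm q⁻¹) fun x => Abelianization.of (f x)

theorem total_inl (f : X → A) :
    total (inl f : PermWreath A Q X) = ∏ x, Abelianization.of (f x) := by
  simp [total]

theorem total_inr (q : Q) : total (inr q : PermWreath A Q X) = 1 := by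
  simp [total]

theorem inr_mem_ker_total (q : Q) : (inr q : PermWreath A Q X) ∈ total.ker := total_inr q

theorem inl_div_mem_ker_total [DecidableEq X] (i j : X) (a : A) :
    (inl (mulSingle i a / mulSingle j a) : PermWreath A Q X) ∈ total.ker := by
  simp [total_inl, Pi.mulSingle_apply, apply_ite]

theorem ker_total_le [DecidableEq X] (hX : 3 ≤ Nat.card X) {S : Set A} (hS : Subgroup.closure S = ⊤)
    {L : Subgroup (PermWreath A Q X)} (hinr : ∀ q, inr q ∈ L)
    (hinl : ∀ i j, ∀ s ∈ S, inl (mulSingle i s / mulSingle j s) ∈ L) : total.ker ≤ L := by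
  intro w hw
  rw [← SemidirectProduct.inl_left_mul_inr_right w] at hw ⊢
  refine mul_mem ?_ (hinr _)
  rw [MonoidHom.mem_ker, map_mul, total_inr, mul_one, total_inl] at hw
  exact mem_of_prod_abelianization_eq_one (D := L.comap inl) hX hS hinl hw

theorem fg_ker_total [Group.FG A] [Group.FG Q] (hX : 3 ≤ Nat.card X) :
    Group.FG (total (A := A) (Q := Q) (X := X)).ker := by
  obtain ⟨S, hS, hSfin⟩ := Group.fg_iff.1 ‹Group.FG A›
  obtain ⟨T, hT, hTfin⟩ := Group.fg_iff.1 ‹Group.FG Q›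
  classical
  let gens : Set (PermWreath A Q X) :=
    inr '' T ∪ ⋃ i, ⋃ j, (fun s => inl (mulSingle i s / mulSingle j s)) '' S
  have hgens : gens.Finite :=
    (hTfin.image _).union (Set.finite_iUnion fun i => Set.finite_iUnion fun j => hSfin.image _)
  have hker : total.ker = Subgroup.closure gens := by
    refine le_antisymm (ker_total_le hX hS (fun q => ?_) fun i j s hs => ?_) ?_
    · have : Subgroup.closure T ≤ (Subgroup.closure gens).comap inr :=
        (Subgroup.closure_le _).2 fun t ht => Subgroup.subset_closure (.inl ⟨t, ht, rfl⟩)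
      exact this (hT ▸ Subgroup.mem_top q)
    · exact Subgroup.subset_closure (.inr (Set.mem_iUnion₂.2 ⟨i, j, s, hs, rfl⟩))
    · refine (Subgroup.closure_le _).2 (Set.union_subset ?_ ?_)
      · rintro _ ⟨q, -, rfl⟩
        exact inr_mem_ker_total q
      · refine Set.iUnion₂_subset fun i j => ?_
        rintro _ ⟨a, -, rfl⟩
        exact inl_div_mem_ker_total i j a
  have := hgens.to_subtype
  rw [hker]
  exact Group.closure_finite_fg gens

theorem isPerfect_ker_total [Group.IsPerfect Q] [MulAction.IsPretransitive Q X]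
    (hX : 3 ≤ Nat.card X) : Group.IsPerfect (total (A := A) (Q := Q) (X := X)).ker := by
  classical
  set K := (total (A := A) (Q := Q) (X := X)).ker
  have hinr (q : Q) : inr q ∈ ⁅K, K⁆ := by
    have : (commutator Q).map inr ≤ ⁅K, K⁆ := by
      rw [commutator_def, Subgroup.map_commutator]
      refine Subgroup.commutator_mono ?_ ?_ <;>
        exact Subgroup.map_le_iff_le_comap.2 fun q _ => inr_mem_ker_total q
    exact this ⟨q, Group.isPerfect_def.1 ‹_› ▸ Subgroup.mem_top q, rfl⟩
  refine Subgroup.isPerfect_iff.2 (Subgroup.commutator_le_self K |>.antisymm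
    (ker_total_le hX Subgroup.closure_univ hinr fun i j a _ => ?_))
  obtain ⟨q, rfl⟩ := MulAction.exists_smul_eq Q i j
  have : (inl (mulSingle i a / mulSingle (q • i) a) : PermWreath A Q X) =
      inl (mulSingle i a) * inr q * (inl (mulSingle i a))⁻¹ * (inr q)⁻¹ := by
    rw [map_div, ← conj_inl_mulSingle]
    simp [div_eq_mul_inv, mul_assoc]
  rw [this]
  exact mul_mem (Subgroup.Normal.conj_mem inferInstance _ (hinr q) _) (inv_mem (hinr q))

theorem exists_injective_ker_total (A : Type*) [Group A] [Group.FG A] (m : ℕ) :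
    ∃ (X : Type) (_ : Fintype X), m ≤ Nat.card X ∧ ∀ (Q : Type*) [Group Q] [MulAction Q X],
      ∃ φ : A →* (total (A := A) (Q := Q) (X := X)).ker, Function.Injective φ := by
  obtain ⟨X, _, β, hX, ⟨i, hi⟩, hβ⟩ := exists_endomorphisms_prod_abelianization_eq_one A m
  refine ⟨X, inferInstance, hX, fun Q _ _ =>
    ⟨(inl.comp (MonoidHom.pi β)).codRestrict _ fun a => (total_inl _).trans (hβ a), ?_⟩⟩
  refine .of_comp (f := fun w => w.1.left i) fun a b hab => ?_
  change β i a = β i b at hab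
  simpa [hi] using hab

end PermWreath

end PermWreath

namespace LocallyUpToPowers

variable {P : (H : Type u) → [Group H] → Prop} {A B : Type u} [Group A] [Group B]
  (hiso : ∀ (A B : Type u) [Group A] [Group B], (A ≃* B) → P A → P B)

include hiso

theorem of_pow_mem_range {f : A →* B} (hf : Function.Injective f) {m : ℕ} (hm : 0 < m)
    (hpow : ∀ b, b ^ m ∈ f.range) (hA : LocallyUpToPowers P A) : LocallyUpToPowers P B := by
  intro k γ
  choose ν hν using fun i => hpow (γ i)
  obtain ⟨t, ht, hP⟩ := hA k ν
  refine ⟨fun i => m * t i, fun i => Nat.mul_pos hm (ht i), ?_⟩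
  have hmap : Subgroup.closure (Set.range fun i => γ i ^ (m * t i)) =
      (Subgroup.closure (Set.range fun i => ν i ^ t i)).map f := by
    rw [MonoidHom.map_closure, ← Set.range_comp]
    simp only [Function.comp_def, map_pow, hν, pow_mul]
  exact hmap ▸ hiso _ _ (Subgroup.equivMapOfInjective _ f hf) hP

theorem of_injective {f : A →* B} (hf : Function.Injective f) (hB : LocallyUpToPowers P B) :
    LocallyUpToPowers P A := by
  intro k γ
  obtain ⟨t, ht, hP⟩ := hB k fun i => f (γ i)
  have hmap : Subgroup.closure (Set.range fun i => f (γ i) ^ t i) =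
      (Subgroup.closure (Set.range fun i => γ i ^ t i)).map f := by
    rw [MonoidHom.map_closure, ← Set.range_comp]
    simp only [Function.comp_def, map_pow]
  exact ⟨t, ht, hiso _ _ (Subgroup.equivMapOfInjective _ f hf).symm (hmap ▸ hP)⟩

theorem semidirectProduct {Q : Type} [Group Q] [Finite Q] {φ : Q →* MulAut A}
    (hA : LocallyUpToPowers P A) : LocallyUpToPowers P (A ⋊[φ] Q) := by
  have hQ : 0 < Nat.card Q := Nat.card_pos
  refine of_pow_mem_range hiso SemidirectProduct.inl_injective hQ (fun b => ?_) hA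
  rw [SemidirectProduct.range_inl_eq_ker_rightHom, MonoidHom.mem_ker, map_pow, pow_card_eq_one']

theorem of_isMulTorsion (hP : P PUnit) (hA : IsMulTorsion A) : LocallyUpToPowers P A := by
  intro k γ
  refine ⟨fun i => orderOf (γ i), fun i => (hA (γ i)).orderOf_pos, ?_⟩
  have hbot : Subgroup.closure (Set.range fun i => γ i ^ orderOf (γ i)) = ⊥ := by
    simp [Subgroup.closure_eq_bot_iff, pow_orderOf_eq_one]
  exact hbot ▸ hiso _ _ MulEquiv.ofUnique hP

theorem apply_punit (hA : LocallyUpToPowers P A) : P PUnit := by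
  obtain ⟨t, -, hP⟩ := hA 0 default
  rw [Set.range_eq_empty, Subgroup.closure_empty] at hP
  exact hiso _ _ MulEquiv.ofUnique hP

variable (hsub : ∀ (A : Type u) [Group A] (K : Subgroup A), P A → P K)
  (hprod : ∀ (A B : Type u) [Group A] [Group B], P A → P B → P (A × B))

include hsub hprod

theorem prod (hA : LocallyUpToPowers P A) (hB : LocallyUpToPowers P B) :
    LocallyUpToPowers P (A × B) := by
  intro k γ
  obtain ⟨s, hs, hPs⟩ := hA k fun i => (γ i).1
  obtain ⟨t, ht, hPt⟩ := hB k fun i => (γ i).2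
  set K := Subgroup.closure (Set.range fun i => (γ i).1 ^ s i)
  set L := Subgroup.closure (Set.range fun i => (γ i).2 ^ t i)
  refine ⟨fun i => s i * t i, fun i => Nat.mul_pos (hs i) (ht i), ?_⟩
  have hle : Subgroup.closure (Set.range fun i => γ i ^ (s i * t i)) ≤ K.prod L := by
    refine (Subgroup.closure_le _).2 (Set.range_subset_iff.2 fun i => ⟨?_, ?_⟩)
    · rw [Prod.pow_fst, pow_mul]
      exact pow_mem (Subgroup.subset_closure (Set.mem_range_self i)) _
    · rw [Prod.pow_snd, pow_mul']
      exact pow_mem (Subgroup.subset_closure (Set.mem_range_self i)) _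
  exact hiso _ _ (Subgroup.subgroupOfEquivOfLe hle)
    (hsub _ _ (hiso _ _ (K.prodEquiv L).symm (hprod _ _ hPs hPt)))

theorem pi (X : Type) [Finite X] (hA : LocallyUpToPowers P A) :
    LocallyUpToPowers P (X → A) := by
  induction X using Finite.induction_empty_option with
  | of_equiv e ih =>
    let F := MulEquiv.arrowCongr e.symm (.refl A)
    exact of_injective hiso (f := F.toMonoidHom) F.injective ih
  | h_empty =>
    exact of_isMulTorsion hiso (apply_punit hiso hA) isMulTorsion_of_finite
  | @h_option X _ ih =>
    let F : (Option X → A) ≃* A × (X → A) :=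
      { Equiv.piOptionEquivProd with map_mul' := fun _ _ => rfl }
    exact of_injective hiso (f := F.toMonoidHom) F.injective (prod hiso hsub hprod hA ih)

end LocallyUpToPowers

theorem embeds_into_fg_perfect_group_locally_P_general
    (P : (H : Type u) → [Group H] → Prop)
    (hiso : ∀ (A B : Type u) [Group A] [Group B], (A ≃* B) → P A → P B)
    (hsub : ∀ (A : Type u) [Group A] (K : Subgroup A), P A → P K)
    (hprod : ∀ (A B : Type u) [Group A] [Group B], P A → P B → P (A × B))
    {G : Type u} [Group G] (hfg : Group.FG G) (hloc : LocallyUpToPowers P G) :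
    ∃ (Γ : Type u) (_ : Group Γ) (φ : G →* Γ),
      Function.Injective φ ∧
      Group.FG Γ ∧
      commutator Γ = ⊤ ∧
      Infinite Γ ∧
      LocallyUpToPowers P Γ := by
  obtain ⟨T, _, _, _, hT⟩ := exists_infinite_fg_isMulTorsion
  obtain ⟨X, _, hX, hφ⟩ := PermWreath.exists_injective_ker_total (G × T) 5
  classical
  obtain ⟨φ, hφ⟩ := hφ (alternatingGroup X)
  have hX₃ : 3 ≤ Nat.card X := by lia
  have : Group.IsPerfect (alternatingGroup X) :=
    Group.isPerfect_def.2 (commutator_alternatingGroup_eq_top hX)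
  have : MulAction.IsPretransitive (alternatingGroup X) X :=
    alternatingGroup.isPretransitive_of_three_le_card X hX₃
  have hGT : LocallyUpToPowers P (G × T) :=
    hloc.prod hiso hsub hprod (.of_isMulTorsion hiso (hloc.apply_punit hiso) hT)
  have hW : LocallyUpToPowers P (PermWreath (G × T) (alternatingGroup X) X) :=
    (hGT.pi hiso hsub hprod X).semidirectProduct hiso
  exact ⟨PermWreath.total.ker, inferInstance, φ.comp (.inl G T),
    hφ.comp (Prod.mk_left_injective 1), PermWreath.fg_ker_total hX₃,
    Group.isPerfect_def.1 (PermWreath.isPerfect_ker_total hX₃), .of_injective φ hφ,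
    hW.of_injective hiso (Subgroup.subtype_injective _)⟩

/-- Let `P` be an isomorphism-invariant property of groups closed under subgroups and
direct products of two groups. Every finitely generated, residually finite group that
is locally `P` up to powers embeds into a finitely generated, perfect, infinite group
that is locally `P` up to powers. -/
theorem embeds_into_fg_perfect_group_locally_P
    (P : (H : Type u) → [inst : Group H] → Prop)
    (hiso : ∀ (A B : Type u) [Group A] [Group B], (A ≃* B) → P A → P B)
    (hsub : ∀ (A : Type u) [Group A] (K : Subgroup A), P A → P K)
    (hprod : ∀ (A B : Type u) [Group A] [Group B], P A → P B → P (A × B))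
    {G : Type u} [Group G]
    (hfg : Group.FG G) (hrf : ResiduallyFinite G) (hloc : LocallyUpToPowers P G) :
    ∃ (Γ : Type u) (_ : Group Γ) (φ : G →* Γ),
      Function.Injective φ ∧
      Group.FG Γ ∧
      commutator Γ = ⊤ ∧
      Infinite Γ ∧
      LocallyUpToPowers P Γ :=
  embeds_into_fg_perfect_group_locally_P_general P hiso hsub hprod hfg hloc
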